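/- arXiv:math-ph/0305033 — 3 statements merged into one kernel-verified Lean document; each statement's English description precedes it below -/
import Mathlib

section
/- Let C₂ → C₁ → C₀ be real vector spaces with linear maps d₂ : C₂ → C₁ and d₁ : C₁ → C₀ satisfying ker d₁ = range d₂ (exactness at C₁). Let G be a group acting on C₂, C₁, C₀ by linear automorphisms ρ₂(g), ρ₁(g), ρ₀(g) commuting with d₂ and d₁. Let γ ∈ C₁ be such that d₁(γ) is G-invariant, and for each g ∈ G let τ_g ∈ C₂ be any element with γ = ρ₁(g)γ + d₂(τ_g) (such τ_g exist by exactness, since γ − ρ₁(g)γ ∈ ker d₁). Then there exists a G-invariant γ' ∈ C₁ with d₁(γ') = d₁(γ) if and only if there exists Δ ∈ C₂ such that d₂( ρ₂(g)Δ − Δ − τ_g ) = 0 for all g ∈ G. -/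
/-- Criterion for the existence of an invariant primitive. Given
`C₂ → C₁ → C₀` exact at `C₁`, a group `G` acting linearly on all three spaces
compatibly with the differentials, `γ ∈ C₁` with `d₁ γ` invariant, and elements
`τ_g` with `γ = ρ₁(g)γ + d₂(τ_g)`, there is a `G`-invariant `γ'` with
`d₁ γ' = d₁ γ` iff there is `Δ ∈ C₂` with `d₂(ρ₂(g)Δ − Δ − τ_g) = 0` for all
`g`. -/
theorem invariant_primitive_criterion (G : Type*) [Group G]
    (C₂ C₁ C₀ : Type*) [AddCommGroup C₂] [Module ℝ C₂]
    [AddCommGroup C₁] [Module ℝ C₁] [AddCommGroup C₀] [Module ℝ C₀]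
    (d₂ : C₂ →ₗ[ℝ] C₁) (d₁ : C₁ →ₗ[ℝ] C₀)
    (hexact : LinearMap.ker d₁ = LinearMap.range d₂)
    (ρ₂ : G →* (C₂ ≃ₗ[ℝ] C₂)) (ρ₁ : G →* (C₁ ≃ₗ[ℝ] C₁)) (ρ₀ : G →* (C₀ ≃ₗ[ℝ] C₀))
    (hcomm₂ : ∀ (g : G) (c : C₂), d₂ (ρ₂ g c) = ρ₁ g (d₂ c))
    (hcomm₁ : ∀ (g : G) (c : C₁), d₁ (ρ₁ g c) = ρ₀ g (d₁ c))
    (γ : C₁) (hγ : ∀ g : G, ρ₀ g (d₁ γ) = d₁ γ)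
    (τ : G → C₂) (hτ : ∀ g : G, γ = ρ₁ g γ + d₂ (τ g)) :
    (∃ γ' : C₁, (∀ g : G, ρ₁ g γ' = γ') ∧ d₁ γ' = d₁ γ)
      ↔ (∃ Δ : C₂, ∀ g : G, d₂ (ρ₂ g Δ - Δ - τ g) = 0) := by
  -- By exactness the primitives of `d₁ γ` are exactly the `γ + d₂ Δ`, and the cocycle expression
  -- measures the failure of `γ + d₂ Δ` to be invariant.
  have key : ∀ (Δ : C₂) (g : G),
      d₂ (ρ₂ g Δ - Δ - τ g) = ρ₁ g (γ + d₂ Δ) - (γ + d₂ Δ) := by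
    intro Δ g
    have hd : d₂ (τ g) = γ - ρ₁ g γ := eq_sub_of_add_eq' (hτ g).symm
    rw [map_sub, map_sub, hcomm₂, hd, map_add]
    abel
  constructor
  · rintro ⟨γ', hinv, hd⟩
    have hmem : γ' - γ ∈ LinearMap.range d₂ := by
      rw [← hexact, LinearMap.mem_ker, map_sub, hd, sub_self]
    obtain ⟨Δ, hΔ⟩ := hmem
    refine ⟨Δ, fun g => ?_⟩
    rw [key, hΔ, add_sub_cancel, hinv, sub_self]
  · rintro ⟨Δ, hΔ⟩
    refine ⟨γ + d₂ Δ, fun g => sub_eq_zero.mp ((key Δ g).symm.trans (hΔ g)), ?_⟩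
    have hker : d₂ Δ ∈ LinearMap.ker d₁ := hexact ▸ LinearMap.mem_range_self d₂ Δ
    rw [map_add, LinearMap.mem_ker.mp hker, add_zero]
end

section
/- Let X₀, X₁, X₂ be real vector spaces, d₁ : X₁ → X₀ and d₂ : X₂ → X₁ linear with d₁∘d₂ = 0, and let s₀ : X₀ → X₁, s₁ : X₁ → X₂ be linear maps satisfying the homotopy identity −s₀(d₁(c)) = c + d₂(s₁(c)) for all c ∈ X₁. Let l₂ : X₀ × X₀ → X₀ be bilinear, define the Jacobiator J(x,y,z) = l₂(l₂(x,y),z) + l₂(l₂(y,z),x) + l₂(l₂(z,x),y), assume J(x,y,z) ∈ range d₁ for all x,y,z ∈ X₀, and set l₃ = s₀∘J. Let T₀ : X₀ → X₀ and T₁ : X₁ → X₁ be linear maps with T₀∘d₁ = d₁∘T₁ and T₀(l₂(x,y)) = l₂(T₀x, T₀y) for all x,y. Then for all x,y,z ∈ X₀: l₃(T₀x, T₀y, T₀z) = T₁(l₃(x,y,z)) + d₂( s₁( T₁( l₃(x,y,z) ) ) ); in particular, l₃(T₀x, T₀y, T₀z) − T₁(l₃(x,y,z)) lies in the image of d₂.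 -/
/-- The trilinear sh-Lie structure map `l₃ = s₀ ∘ J` commutes with a chain map
`T` (commuting with `d₁` and with `l₂`) up to a `d₂`-exact term:
`l₃(T₀x, T₀y, T₀z) = T₁(l₃(x,y,z)) + d₂(s₁(T₁(l₃(x,y,z))))`. -/
theorem l3_commutes_with_chain_map_up_to_exact
    (X₀ X₁ X₂ : Type*) [AddCommGroup X₀] [Module ℝ X₀]
    [AddCommGroup X₁] [Module ℝ X₁] [AddCommGroup X₂] [Module ℝ X₂]
    (d₁ : X₁ →ₗ[ℝ] X₀) (d₂ : X₂ →ₗ[ℝ] X₁)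
    (hdd : ∀ c : X₂, d₁ (d₂ c) = 0)
    (s₀ : X₀ →ₗ[ℝ] X₁) (s₁ : X₁ →ₗ[ℝ] X₂)
    (hhomotopy : ∀ c : X₁, - s₀ (d₁ c) = c + d₂ (s₁ c))
    (l₂ : X₀ →ₗ[ℝ] X₀ →ₗ[ℝ] X₀)
    (J : X₀ → X₀ → X₀ → X₀)
    (hJ : ∀ x y z : X₀,
      J x y z = l₂ (l₂ x y) z + l₂ (l₂ y z) x + l₂ (l₂ z x) y)
    (hJexact : ∀ x y z : X₀, J x y z ∈ LinearMap.range d₁)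
    (l₃ : X₀ → X₀ → X₀ → X₁)
    (hl₃ : ∀ x y z : X₀, l₃ x y z = s₀ (J x y z))
    (T₀ : X₀ →ₗ[ℝ] X₀) (T₁ : X₁ →ₗ[ℝ] X₁)
    (hT : ∀ c : X₁, T₀ (d₁ c) = d₁ (T₁ c))
    (hTl₂ : ∀ x y : X₀, T₀ (l₂ x y) = l₂ (T₀ x) (T₀ y)) :
    ∀ x y z : X₀,
      l₃ (T₀ x) (T₀ y) (T₀ z)
        = T₁ (l₃ x y z) + d₂ (s₁ (T₁ (l₃ x y z))) := by
  intro x y z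
  have hJT : J (T₀ x) (T₀ y) (T₀ z) = T₀ (J x y z) := by
    simp only [hJ, map_add, hTl₂]
  -- The homotopy identity with `d₁ ∘ d₂ = 0` gives `d₁ ∘ s₀ = -1` on the range of `d₁`,
  -- so `-l₃ x y z` is a primitive of the Jacobiator.
  have hprim : d₁ (l₃ x y z) = -J x y z := by
    obtain ⟨c, hc⟩ := hJexact x y z
    have h : s₀ (d₁ c) = -(c + d₂ (s₁ c)) := by rw [← hhomotopy c, neg_neg]
    rw [hl₃ x y z, ← hc, h, map_neg, map_add, hdd, add_zero]
  -- Transporting this primitive by `T₁` reduces the claim to the homotopy identity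
  -- at `T₁ (l₃ x y z)`.
  rw [← hhomotopy, ← hT, hprim, hl₃ (T₀ x), hJT, map_neg, map_neg, neg_neg]
end

section
/- Let N ≥ 1, let W : ℝ^N → M_N(ℝ) be smooth with W(u) skew-symmetric for all u, and let ε be the 2×2 Levi-Civita symbol (ε^{01} = 1 = −ε^{10}, ε^{00} = ε^{11} = 0). Let ψ, δψ : ℝ² → ℝ^N and h, δh : ℝ² → ℝ^{2×N} (components h^A_μ, A = 1..N, μ = 0,1) all be smooth and compactly supported. For t ∈ ℝ set ψ_t = ψ + tδψ, h_t = h + tδh and define S(t) = ∫_{ℝ²} Σ_{μ,ν,A} ε^{μν} [ (h_t)^A_μ(x) ( ∂_ν (ψ_t)_A(x) + Σ_B W_{AB}(ψ_t(x)) (h_t)^B_ν(x) ) − ½ Σ_B W_{AB}(ψ_t(x)) (h_t)^A_μ(x) (h_t)^B_ν(x) ] dx. Then S is differentiable at t = 0 and S'(0) = ∫_{ℝ²} Σ_{μ,ν,A} [ ½ ε^{μν} R^A_{μν}(x) δψ_A(x) + ε^{μν} ( ∂_ν ψ_A(x) + Σ_B W_{AB}(ψ(x)) h^B_ν(x) )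 δh^A_μ(x) ] dx, where R^A_{μν}(x) = ∂_μ h^A_ν(x) − ∂_ν h^A_μ(x) + Σ_{B,C} (∂W_{BC}/∂u_A)(ψ(x)) h^B_μ(x) h^C_ν(x). -/
/-! The proof differentiates under the integral sign and integrates by parts once.

Since `ε` and `W` are both antisymmetric, the Lagrangian density is
`∑_A (h^A_0 ∂_1 ψ_A - h^A_1 ∂_0 ψ_A) + ∑_{A,B} W_{AB}(ψ) h^A_0 h^B_1` (`density_eq`).
Along the variation it is `C¹` in `(t, x)` and it vanishes for `x` outside the compact set
`tsupport h ∪ tsupport δh`, every term having a factor `h_t`; hence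
`hasDerivAt_integral_of_contDiff` applies. The `t`-derivative of the density at `0` differs from the
Euler–Lagrange density by the divergence
`∑_A (∂_1 (h^A_0 δψ_A) - ∂_0 (h^A_1 δψ_A))` (`variation_eq`), whose integral is zero
(`integral_parts`). -/

open MeasureTheory

/-- The 2×2 Levi-Civita symbol: `ε^{01} = 1 = −ε^{10}`, `ε^{00} = ε^{11} = 0`. -/
noncomputable def leviCivita2 : Fin 2 → Fin 2 → ℝ := fun μ ν =>
  if μ = 0 ∧ ν = 1 then 1 else if μ = 1 ∧ ν = 0 then -1 else 0

/-- Differentiation under the integral sign for a `C¹` integrand whose support in `x` lies in a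
fixed compact set. -/
lemma hasDerivAt_integral_of_contDiff {E : Type*} [NormedAddCommGroup E] [NormedSpace ℝ E]
    [MeasurableSpace E] [BorelSpace E] [SecondCountableTopology E] (m : Measure E)
    [IsFiniteMeasureOnCompacts m] (F : ℝ → E → ℝ) (F' : E → ℝ)
    (hF : ContDiff ℝ 1 (fun p : ℝ × E => F p.1 p.2)) (K : Set E) (hK : IsCompact K)
    (hz : ∀ t, ∀ x ∉ K, F t x = 0) (hF' : ∀ x, HasDerivAt (fun t => F t x) (F' x) 0) :
    Integrable F' m ∧ HasDerivAt (fun t => ∫ x, F t x ∂m) (∫ x, F' x ∂m) 0 := by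
  set D : ℝ → E → ℝ := fun t x => fderiv ℝ (fun p : ℝ × E => F p.1 p.2) (t, x) (1, 0) with hD
  have hDc : Continuous (fun p : ℝ × E => D p.1 p.2) :=
    (hF.continuous_fderiv one_ne_zero).clm_apply continuous_const
  have hDd : ∀ t x, HasDerivAt (fun s => F s x) (D t x) t := fun t x => by
    have h1 : HasFDerivAt (fun p : ℝ × E => F p.1 p.2) _ (t, x) :=
      (hF.differentiable one_ne_zero (t, x)).hasFDerivAt
    have h2 : HasDerivAt (fun s : ℝ => (s, x)) ((1 : ℝ), (0 : E)) t :=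
      (hasDerivAt_id t).prodMk (hasDerivAt_const t x)
    exact h1.comp_hasDerivAt t h2
  have hDz : ∀ t, ∀ x ∉ K, D t x = 0 := fun t x hx => by
    have h1 : HasDerivAt (fun s => F s x) 0 t := by
      simpa only [hz _ x hx] using hasDerivAt_const t (0 : ℝ)
    exact (hDd t x).unique h1
  have hF'D : F' = D 0 := funext fun x => (hF' x).unique (hDd 0 x)
  obtain ⟨C, hC⟩ := ((isCompact_closedBall (0 : ℝ) 1).prod hK).exists_bound_of_continuousOn
    hDc.continuousOn
  have hcont : ∀ t, Continuous (F t) := fun t =>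
    hF.continuous.comp (Continuous.prodMk_right t)
  have hDcont : ∀ t, Continuous (D t) := fun t => hDc.comp (Continuous.prodMk_right t)
  rw [hF'D]
  refine hasDerivAt_integral_of_dominated_loc_of_deriv_le (F := F) (F' := D)
    (bound := K.indicator fun _ => C)
    (Metric.ball_mem_nhds (0 : ℝ) one_pos)
    (Filter.Eventually.of_forall fun t => (hcont t).aestronglyMeasurable) ?_
    (hDcont 0).aestronglyMeasurable ?_ ?_ ?_
  · exact (hcont 0).integrable_of_hasCompactSupport (HasCompactSupport.intro hK (hz 0))
  · refine Filter.Eventually.of_forall fun x t ht => ?_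
    by_cases hx : x ∈ K
    · rw [Set.indicator_of_mem hx]
      exact hC (t, x) ⟨Metric.ball_subset_closedBall ht, hx⟩
    · rw [Set.indicator_of_notMem hx, hDz t x hx, norm_zero]
  · exact (integrable_indicator_iff hK.measurableSet).2 (integrableOn_const hK.measure_lt_top.ne)
  · exact Filter.Eventually.of_forall fun x t _ => hDd t x

/-- The directional derivative of the product `f g`, expanded by the Leibniz rule, has integral
zero when `f` has compact support. -/
lemma integral_parts {E : Type*} [NormedAddCommGroup E] [NormedSpace ℝ E]
    [MeasurableSpace E] [BorelSpace E] [FiniteDimensional ℝ E] (m : Measure E)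
    [m.IsAddHaarMeasure] (f g : E → ℝ) (hf : ContDiff ℝ 1 f) (hg : ContDiff ℝ 1 g)
    (hfc : HasCompactSupport f) (v : E) :
    Integrable (fun x => f x * fderiv ℝ g x v + fderiv ℝ f x v * g x) m ∧
      ∫ x, (f x * fderiv ℝ g x v + fderiv ℝ f x v * g x) ∂m = 0 := by
  have cf : Continuous fun x => fderiv ℝ f x v :=
    (hf.continuous_fderiv one_ne_zero).clm_apply continuous_const
  have cg : Continuous fun x => fderiv ℝ g x v :=
    (hg.continuous_fderiv one_ne_zero).clm_apply continuous_const
  have i1 : Integrable (fun x => f x * fderiv ℝ g x v) m :=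
    (hf.continuous.mul cg).integrable_of_hasCompactSupport hfc.mul_right
  have i2 : Integrable (fun x => fderiv ℝ f x v * g x) m :=
    (cf.mul hg.continuous).integrable_of_hasCompactSupport
      (hfc.fderiv_apply (𝕜 := ℝ) v).mul_right
  have i3 : Integrable (fun x => f x * g x) m :=
    (hf.continuous.mul hg.continuous).integrable_of_hasCompactSupport hfc.mul_right
  refine ⟨i1.add i2, ?_⟩
  rw [integral_add i1 i2, integral_mul_fderiv_eq_neg_fderiv_mul_of_integrable i2 i1 i3
    (fun x _ => hf.differentiable one_ne_zero x) (fun x _ => hg.differentiable one_ne_zero x)]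
  ring

/-- Exchanging the two arguments of a skew form changes its sign. -/
lemma sum_skew {N : ℕ} (w : Fin N → Fin N → ℝ) (hw : ∀ A B, w A B = - w B A) (a b : Fin N → ℝ) :
    ∑ A, ∑ B, w A B * a A * b B = - ∑ A, ∑ B, w A B * b A * a B := by
  rw [Finset.sum_comm, ← Finset.sum_neg_distrib]
  refine Finset.sum_congr rfl fun A _ => ?_
  rw [← Finset.sum_neg_distrib]
  refine Finset.sum_congr rfl fun B _ => ?_
  rw [hw]; ring

/-- The Lagrangian density at a point, with `k μ A = h^A_μ`, `p ν A = ∂_ν ψ_A`, `w = W(ψ)`. -/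
lemma density_eq {N : ℕ} (w : Fin N → Fin N → ℝ) (hw : ∀ A B, w A B = - w B A)
    (k p : Fin 2 → Fin N → ℝ) :
    ∑ μ : Fin 2, ∑ ν : Fin 2, ∑ A : Fin N, leviCivita2 μ ν *
        (k μ A * (p ν A + ∑ B : Fin N, w A B * k ν B)
          - (1/2) * ∑ B : Fin N, w A B * k μ A * k ν B)
      = ∑ A, (k 0 A * p 1 A - k 1 A * p 0 A) + ∑ A, ∑ B, w A B * k 0 A * k 1 B := by
  have e : ∀ μ ν A, k μ A * (p ν A + ∑ B : Fin N, w A B * k ν B)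
          - (1/2) * ∑ B : Fin N, w A B * k μ A * k ν B
      = k μ A * p ν A + (1/2) * ∑ B : Fin N, w A B * k μ A * k ν B := by
    intro μ ν A
    have : k μ A * ∑ B : Fin N, w A B * k ν B = ∑ B : Fin N, w A B * k μ A * k ν B := by
      rw [Finset.mul_sum]; exact Finset.sum_congr rfl fun B _ => by ring
    rw [mul_add, this]; ring
  simp only [e]
  simp only [Fin.sum_univ_two, leviCivita2]
  simp [Finset.sum_add_distrib, ← Finset.mul_sum, Finset.sum_sub_distrib]
  rw [sum_skew w hw (k 1) (k 0)]
  ring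

/-- The `t`-derivative of the density equals the Euler–Lagrange density plus a divergence, at a
point. Here `k μ A = h^A_μ`, `p ν A = ∂_ν ψ_A`, `q = δψ`, `r ν A = ∂_ν δψ_A`, `l = δh`,
`d μ ν A = ∂_μ h^A_ν`, `w = W(ψ)` and `w' A = (∂W/∂u_A)(ψ)`. -/
lemma variation_eq {N : ℕ} (w : Fin N → Fin N → ℝ) (hw : ∀ A B, w A B = - w B A)
    (w' : Fin N → Fin N → Fin N → ℝ) (hw' : ∀ A B C, w' A B C = - w' A C B)
    (k p r l : Fin 2 → Fin N → ℝ) (q : Fin N → ℝ) (d : Fin 2 → Fin 2 → Fin N → ℝ) :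
    (∑ A, ((l 0 A * p 1 A + k 0 A * r 1 A) - (l 1 A * p 0 A + k 1 A * r 0 A)) +
      ∑ A, ∑ B, (((∑ C, q C * w' C A B) * k 0 A + w A B * l 0 A) * k 1 B
        + w A B * k 0 A * l 1 B))
      - ∑ A, ((k 0 A * r 1 A + d 1 0 A * q A) - (k 1 A * r 0 A + d 0 1 A * q A))
    = ∑ μ : Fin 2, ∑ ν : Fin 2, ∑ A : Fin N,
          ((1/2) * leviCivita2 μ ν *
              (d μ ν A - d ν μ A + ∑ B : Fin N, ∑ C : Fin N, w' A B C * k μ B * k ν C) * q A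
            + leviCivita2 μ ν * (p ν A + ∑ B : Fin N, w A B * k ν B) * l μ A) := by
  have e1 : ∀ A, ∑ B, ∑ C, w' A B C * k 1 B * k 0 C = - ∑ B, ∑ C, w' A B C * k 0 B * k 1 C :=
    fun A => sum_skew (w' A) (hw' A) (k 1) (k 0)
  have e2 : ∑ A, ∑ B, w A B * k 0 A * l 1 B = - ∑ A, ∑ B, w A B * l 1 A * k 0 B :=
    sum_skew w hw _ _
  have e3 : ∑ A, ∑ B, (∑ C, q C * w' C A B) * k 0 A * k 1 B
      = ∑ A, (∑ B, ∑ C, w' A B C * k 0 B * k 1 C) * q A := by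
    simp only [Finset.sum_mul]
    rw [Finset.sum_comm_cycle]
    refine Finset.sum_congr rfl fun A _ => Finset.sum_congr rfl fun B _ =>
      Finset.sum_congr rfl fun C _ => by ring
  have e4 : ∀ a b : Fin 2, ∑ A, ∑ B, w A B * l a A * k b B
      = ∑ A, (∑ B, w A B * k b B) * l a A := fun a b => by
    refine Finset.sum_congr rfl fun A _ => ?_
    rw [Finset.sum_mul]
    exact Finset.sum_congr rfl fun B _ => by ring
  have e5 : ∑ A, ∑ B, (((∑ C, q C * w' C A B) * k 0 A + w A B * l 0 A) * k 1 B
        + w A B * k 0 A * l 1 B)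
      = ∑ A, (∑ B, ∑ C, w' A B C * k 0 B * k 1 C) * q A
        + ∑ A, (∑ B, w A B * k 1 B) * l 0 A - ∑ A, (∑ B, w A B * k 0 B) * l 1 A := by
    rw [← e3, ← e4, ← e4, sub_eq_add_neg, ← e2]
    simp only [add_mul, Finset.sum_add_distrib]
  rw [e5]
  simp only [Fin.sum_univ_two, leviCivita2]
  simp [e1]
  simp only [← Finset.sum_add_distrib, ← Finset.sum_sub_distrib, ← Finset.sum_neg_distrib]
  refine Finset.sum_congr rfl fun A _ => ?_
  simp only [Finset.sum_neg_distrib]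
  ring

/-- First variation of Ikeda's Poisson sigma model action
`S(t) = ∫ ε^{μν} [ h_t{}^A_μ ( ∂_ν (ψ_t)_A + W_{AB}(ψ_t) h_t{}^B_ν )
        − ½ W_{AB}(ψ_t) h_t{}^A_μ h_t{}^B_ν ]`
along `ψ_t = ψ + tδψ`, `h_t = h + tδh`: `S` is differentiable at `t = 0` with
`S'(0) = ∫ [ ½ ε^{μν} R^A_{μν} δψ_A + ε^{μν} ( ∂_ν ψ_A + W_{AB}(ψ) h^B_ν ) δh^A_μ ]`
where `R^A_{μν} = ∂_μ h^A_ν − ∂_ν h^A_μ + (∂W_{BC}/∂u_A)(ψ) h^B_μ h^C_ν`. -/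
theorem ikeda_first_variation (N : ℕ) (hN : 1 ≤ N)
    (W : (Fin N → ℝ) → Matrix (Fin N) (Fin N) ℝ)
    (hWsmooth : ∀ A B : Fin N, ContDiff ℝ (⊤ : ℕ∞) fun u => W u A B)
    (hWskew : ∀ (u : Fin N → ℝ) (A B : Fin N), W u A B = - W u B A)
    (ψ δψ : (Fin 2 → ℝ) → Fin N → ℝ)
    (h δh : (Fin 2 → ℝ) → Fin 2 → Fin N → ℝ)
    (hψ : ContDiff ℝ (⊤ : ℕ∞) ψ) (hδψ : ContDiff ℝ (⊤ : ℕ∞) δψ)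
    (hh : ContDiff ℝ (⊤ : ℕ∞) h) (hδh : ContDiff ℝ (⊤ : ℕ∞) δh)
    (hψc : HasCompactSupport ψ) (hδψc : HasCompactSupport δψ)
    (hhc : HasCompactSupport h) (hδhc : HasCompactSupport δh)
    (S : ℝ → ℝ)
    (hS : ∀ t : ℝ, S t = ∫ x : Fin 2 → ℝ,
      ∑ μ : Fin 2, ∑ ν : Fin 2, ∑ A : Fin N, leviCivita2 μ ν *
        ((h x μ A + t * δh x μ A) *
            (fderiv ℝ (fun y => ψ y A + t * δψ y A) x (Pi.single ν 1)
              + ∑ B : Fin N,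
                  W (fun C => ψ x C + t * δψ x C) A B * (h x ν B + t * δh x ν B))
          - (1/2) * ∑ B : Fin N,
              W (fun C => ψ x C + t * δψ x C) A B *
                (h x μ A + t * δh x μ A) * (h x ν B + t * δh x ν B))) :
    HasDerivAt S
      (∫ x : Fin 2 → ℝ,
        ∑ μ : Fin 2, ∑ ν : Fin 2, ∑ A : Fin N,
          ((1/2) * leviCivita2 μ ν *
              (fderiv ℝ (fun y => h y ν A) x (Pi.single μ 1)
                - fderiv ℝ (fun y => h y μ A) x (Pi.single ν 1)
                + ∑ B : Fin N, ∑ C : Fin N,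
                    fderiv ℝ (fun u => W u B C) (ψ x) (Pi.single A 1) *
                      h x μ B * h x ν C) *
              δψ x A
            + leviCivita2 μ ν *
                (fderiv ℝ (fun y => ψ y A) x (Pi.single ν 1)
                  + ∑ B : Fin N, W (ψ x) A B * h x ν B) *
                δh x μ A))
      0 := by
  have one_le : (1 : WithTop ℕ∞) ≤ ((⊤ : ℕ∞) : WithTop ℕ∞) := by exact_mod_cast le_top
  have two_le : (1 + 1 : WithTop ℕ∞) ≤ ((⊤ : ℕ∞) : WithTop ℕ∞) := by
    rw [one_add_one_eq_two]
    exact WithTop.coe_le_coe.2 (le_top : (2 : ℕ∞) ≤ ⊤)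
  have cψ : ∀ A, ContDiff ℝ (⊤ : ℕ∞) fun x => ψ x A := fun A => contDiff_pi.1 hψ A
  have cδψ : ∀ A, ContDiff ℝ (⊤ : ℕ∞) fun x => δψ x A := fun A => contDiff_pi.1 hδψ A
  have ch : ∀ μ A, ContDiff ℝ (⊤ : ℕ∞) fun x => h x μ A := fun μ A =>
    contDiff_pi.1 (contDiff_pi.1 hh μ) A
  have cδh : ∀ μ A, ContDiff ℝ (⊤ : ℕ∞) fun x => δh x μ A := fun μ A =>
    contDiff_pi.1 (contDiff_pi.1 hδh μ) A
  have dψ : ∀ A, Differentiable ℝ fun x => ψ x A := fun A => (cψ A).differentiable (by simp)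
  have dδψ : ∀ A, Differentiable ℝ fun x => δψ x A := fun A => (cδψ A).differentiable (by simp)
  have dW : ∀ A B, Differentiable ℝ fun u => W u A B :=
    fun A B => (hWsmooth A B).differentiable (by simp)
  set p : (Fin 2 → ℝ) → Fin 2 → Fin N → ℝ :=
    fun x ν A => fderiv ℝ (fun y => ψ y A) x (Pi.single ν 1) with hp
  set r : (Fin 2 → ℝ) → Fin 2 → Fin N → ℝ :=
    fun x ν A => fderiv ℝ (fun y => δψ y A) x (Pi.single ν 1) with hr
  have cp : ∀ ν A, ContDiff ℝ 1 fun x => p x ν A := fun ν A =>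
    ((cψ A).fderiv_right (m := 1) two_le).clm_apply contDiff_const
  have cr : ∀ ν A, ContDiff ℝ 1 fun x => r x ν A := fun ν A =>
    ((cδψ A).fderiv_right (m := 1) two_le).clm_apply contDiff_const
  have hpt : ∀ (t : ℝ) x ν A,
      fderiv ℝ (fun y => ψ y A + t * δψ y A) x (Pi.single ν 1) = p x ν A + t * r x ν A := by
    intro t x ν A
    have := ((dψ A x).hasFDerivAt.add ((dδψ A x).hasFDerivAt.const_mul t)).fderiv
    change fderiv ℝ (fun y => ψ y A + t * δψ y A) x = _ at this
    rw [this]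
    simp [hp, hr]
  set G : ℝ → (Fin 2 → ℝ) → ℝ := fun t x =>
    ∑ A, ((h x 0 A + t * δh x 0 A) * (p x 1 A + t * r x 1 A)
        - (h x 1 A + t * δh x 1 A) * (p x 0 A + t * r x 0 A))
      + ∑ A, ∑ B, W (fun C => ψ x C + t * δψ x C) A B * (h x 0 A + t * δh x 0 A)
          * (h x 1 B + t * δh x 1 B) with hG
  have hSG : S = fun t => ∫ x, G t x := by
    funext t
    rw [hS]
    refine integral_congr_ae (Filter.Eventually.of_forall fun x => ?_)
    simp only [hpt]
    exact density_eq (fun A B => W (fun C => ψ x C + t * δψ x C) A B) (hWskew _)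
      (fun μ A => h x μ A + t * δh x μ A) (fun ν A => p x ν A + t * r x ν A)
  -- The `t`-derivative of `G` at `0`.
  set G' : (Fin 2 → ℝ) → ℝ := fun x =>
    ∑ A, ((δh x 0 A * p x 1 A + h x 0 A * r x 1 A) - (δh x 1 A * p x 0 A + h x 1 A * r x 0 A)) +
      ∑ A, ∑ B, (((∑ C, δψ x C * fderiv ℝ (fun u => W u A B) (ψ x) (Pi.single C 1)) * h x 0 A
          + W (ψ x) A B * δh x 0 A) * h x 1 B + W (ψ x) A B * h x 0 A * δh x 1 B) with hG'
  have lin : ∀ a b : ℝ, HasDerivAt (fun t : ℝ => a + t * b) b 0 := fun a b => by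
    simpa using ((hasDerivAt_id (0 : ℝ)).mul_const b).const_add a
  have hder : ∀ x, HasDerivAt (fun t => G t x) (G' x) 0 := by
    intro x
    have hWd : ∀ A B, HasDerivAt (fun t : ℝ => W (fun C => ψ x C + t * δψ x C) A B)
        (∑ C, δψ x C * fderiv ℝ (fun u => W u A B) (ψ x) (Pi.single C 1)) 0 := by
      intro A B
      have h1 : HasDerivAt (fun t : ℝ => fun C => ψ x C + t * δψ x C) (δψ x) 0 :=
        hasDerivAt_pi.2 fun C => lin _ _
      have h2 : HasFDerivAt (fun u => W u A B) (fderiv ℝ (fun u => W u A B) (ψ x))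
          ((fun t : ℝ => fun C => ψ x C + t * δψ x C) 0) := by
        simpa using (dW A B (ψ x)).hasFDerivAt
      have h3 := h2.comp_hasDerivAt (0 : ℝ) h1
      have e : fderiv ℝ (fun u => W u A B) (ψ x) (δψ x)
          = ∑ C, δψ x C * fderiv ℝ (fun u => W u A B) (ψ x) (Pi.single C 1) := by
        have e1 : δψ x = ∑ C, δψ x C • (Pi.single C 1 : Fin N → ℝ) := by
          ext C
          simp [Finset.sum_apply, Pi.single_apply]
        conv_lhs => rw [e1]
        simp only [map_sum, map_smul, smul_eq_mul]
      rw [e] at h3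
      exact h3
    have := (HasDerivAt.fun_sum (u := Finset.univ) fun A _ =>
      ((lin (h x 0 A) (δh x 0 A)).mul (lin (p x 1 A) (r x 1 A))).sub
        ((lin (h x 1 A) (δh x 1 A)).mul (lin (p x 0 A) (r x 0 A)))).add
      (HasDerivAt.fun_sum (u := Finset.univ) fun A _ =>
        HasDerivAt.fun_sum (u := Finset.univ) fun B _ =>
          ((hWd A B).mul (lin (h x 0 A) (δh x 0 A))).mul (lin (h x 1 B) (δh x 1 B)))
    exact this.congr_deriv (by simp [hG'])
  have hsm : ContDiff ℝ 1 (fun q : ℝ × (Fin 2 → ℝ) => G q.1 q.2) := by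
    have b1 : ∀ μ A, ContDiff ℝ 1
        (fun q : ℝ × (Fin 2 → ℝ) => h q.2 μ A + q.1 * δh q.2 μ A) := fun μ A =>
      (((ch μ A).of_le one_le).comp contDiff_snd).add
        (contDiff_fst.mul (((cδh μ A).of_le one_le).comp contDiff_snd))
    have b2 : ∀ μ A, ContDiff ℝ 1
        (fun q : ℝ × (Fin 2 → ℝ) => p q.2 μ A + q.1 * r q.2 μ A) := fun μ A =>
      ((cp μ A).comp contDiff_snd).add (contDiff_fst.mul ((cr μ A).comp contDiff_snd))
    have b3 : ContDiff ℝ 1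
        (fun q : ℝ × (Fin 2 → ℝ) => fun C => ψ q.2 C + q.1 * δψ q.2 C) :=
      contDiff_pi.2 fun C => (((cψ C).of_le one_le).comp contDiff_snd).add
        (contDiff_fst.mul (((cδψ C).of_le one_le).comp contDiff_snd))
    exact (ContDiff.sum fun A _ => ((b1 0 A).mul (b2 1 A)).sub ((b1 1 A).mul (b2 0 A))).add
      (ContDiff.sum fun A _ => ContDiff.sum fun B _ =>
        ((((hWsmooth A B).of_le one_le).comp b3).mul (b1 0 A)).mul (b1 1 B))
  obtain ⟨hint, hmain⟩ := hasDerivAt_integral_of_contDiff volume G G' hsm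
    (tsupport h ∪ tsupport δh) (hhc.isCompact.union hδhc.isCompact)
    (fun t x hx => by
      have h1 : h x = 0 := image_eq_zero_of_notMem_tsupport fun hh => hx (Or.inl hh)
      have h2 : δh x = 0 := image_eq_zero_of_notMem_tsupport fun hh => hx (Or.inr hh)
      simp [hG, h1, h2]) hder
  have hc : ∀ μ A, HasCompactSupport fun x => h x μ A := fun μ A =>
    hhc.comp_left (g := fun v : Fin 2 → Fin N → ℝ => v μ A) rfl
  have parts : ∀ μ ν A, _ := fun (μ ν : Fin 2) (A : Fin N) =>
    integral_parts (volume : Measure (Fin 2 → ℝ)) (fun x => h x μ A) (fun x => δψ x A)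
      ((ch μ A).of_le one_le) ((cδψ A).of_le one_le) (hc μ A) (Pi.single ν 1)
  have idiv : ∀ A ∈ (Finset.univ : Finset (Fin N)), Integrable (fun x : Fin 2 → ℝ =>
      (h x 0 A * r x 1 A + fderiv ℝ (fun y => h y 0 A) x (Pi.single 1 1) * δψ x A)
        - (h x 1 A * r x 0 A + fderiv ℝ (fun y => h y 1 A) x (Pi.single 0 1) * δψ x A)) :=
    fun A _ => (parts 0 1 A).1.sub (parts 1 0 A).1
  rw [hSG]
  convert hmain using 1
  rw [← sub_zero (∫ x, G' x)]
  have hdiv : ∫ x : Fin 2 → ℝ, ∑ A,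
      ((h x 0 A * r x 1 A + fderiv ℝ (fun y => h y 0 A) x (Pi.single 1 1) * δψ x A)
        - (h x 1 A * r x 0 A + fderiv ℝ (fun y => h y 1 A) x (Pi.single 0 1) * δψ x A)) = 0 := by
    rw [integral_finsetSum _ idiv]
    refine Finset.sum_eq_zero fun A _ => ?_
    rw [integral_sub (parts 0 1 A).1 (parts 1 0 A).1, (parts 0 1 A).2, (parts 1 0 A).2, sub_zero]
  rw [← hdiv, ← integral_sub hint (integrable_finsetSum _ idiv)]
  refine integral_congr_ae (Filter.Eventually.of_forall fun x => ?_)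
  have hskew' : ∀ A B C, fderiv ℝ (fun u => W u B C) (ψ x) (Pi.single A 1)
      = - fderiv ℝ (fun u => W u C B) (ψ x) (Pi.single A 1) := by
    intro A B C
    have : (fun u => W u B C) = fun u => - W u C B := funext fun u => hWskew u B C
    rw [this, fderiv_fun_neg]; rfl
  exact (variation_eq (fun A B => W (ψ x) A B) (hWskew _)
    (fun A B C => fderiv ℝ (fun u => W u B C) (ψ x) (Pi.single A 1)) hskew'
    (h x) (p x) (r x) (δh x) (δψ x)
    (fun μ ν A => fderiv ℝ (fun y => h y ν A) x (Pi.single μ 1))).symm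
end
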